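/- Let ρ be an exchangeable probability measure on S^∞ with directing random measure p̃ and posterior distributions π(ξ^(n)). Assume that, for some p ≥ 1, p̂_n ∈ [S]_p for all n and p̃ ∈ [S]_p with ρ-probability 1. Let {b_n} be an increasing, diverging sequence of positive numbers such that, with ρ-probability 1, the law p̃ satisfies both E_{p̃^∞}[ ( sup_{n≥1} b_n d^{(p)}(p̃, p̂_n) )^p ] ≤ C_p(p̃) and p̃^∞( limsup_{n→∞} b_n d^{(p)}(p̃, p̂_n) ≤ Y_p(p̃) ) = 1, where C_p(p̃) and Y_p(p̃) are real random variables with ρ[C_p(p̃)] < +∞. Then ρ( limsup_{n→∞} b_n · d^{(p)}_{[[S]_p]}( π(ξ^(n)), δ_{p̂_n} ) ≤ Y_p(p̃) ) = 1. -/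

import Mathlib

open MeasureTheory ProbabilityTheory
open scoped ENNReal

noncomputable section

/-- The `p`-Wasserstein-type distance associated with a cost function `c`. -/
noncomputable def wassW {X : Type*} [MeasurableSpace X] (c : X → X → ℝ) (p : ℝ)
    (μ ν : Measure X) : ℝ :=
  sInf {r : ℝ | ∃ γ : Measure (X × X), γ.map Prod.fst = μ ∧ γ.map Prod.snd = ν ∧
    r = (∫ z, c z.1 z.2 ^ p ∂γ) ^ (1 / p)}

/-- Membership in `[S]_p`: a Borel probability measure with finite `p`-th moment. -/
def MemWp {S : Type*} [MeasurableSpace S] [MetricSpace S] (p : ℝ) (𝔭 : Measure S) : Prop :=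
  IsProbabilityMeasure 𝔭 ∧ ∃ x₀ : S, Integrable (fun x => dist x x₀ ^ p) 𝔭

set_option linter.unusedSectionVars false

noncomputable def dF (c : ℕ → ℕ → ℝ≥0∞) (φ : ℕ → ℝ≥0∞) (Q : ℕ → ℕ → ℝ≥0∞) (a b : ℕ → ℝ≥0∞) : ℝ≥0∞ :=
  (∑' i, ∑' j, Q i j * c i j) + (∑' i, φ i * (a i - ∑' j, Q i j)) + ∑' j, φ j * (b j - ∑' i, Q i j)

def dvalid (Q : ℕ → ℕ → ℝ≥0∞) (a b : ℕ → ℝ≥0∞) : Prop :=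
  (∀ i, ∑' j, Q i j ≤ a i) ∧ (∀ j, ∑' i, Q i j ≤ b j)

lemma dF_upper (c : ℕ → ℕ → ℝ≥0∞) (φ : ℕ → ℝ≥0∞) (Q : ℕ → ℕ → ℝ≥0∞) (a b : ℕ → ℝ≥0∞)
    (ha : ∑' i, a i = 1) (hb : ∑' i, b i = 1) (hc : ∀ i j, c i j ≤ φ i + φ j)
    (hv : dvalid Q a b) :
    ∃ g : ℕ → ℕ → ℝ≥0∞, (∀ i, ∑' j, g i j = a i) ∧ (∀ j, ∑' i, g i j = b j) ∧
      ∑' i, ∑' j, g i j * c i j ≤ dF c φ Q a b := by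
  obtain ⟨h1, h2⟩ := hv
  set r : ℕ → ℝ≥0∞ := fun i => a i - ∑' j, Q i j with hr
  set s : ℕ → ℝ≥0∞ := fun j => b j - ∑' i, Q i j with hs
  have hra : ∀ i, ∑' j, Q i j + r i = a i := fun i => add_tsub_cancel_of_le (h1 i)
  have hsb : ∀ j, ∑' i, Q i j + s j = b j := fun j => add_tsub_cancel_of_le (h2 j)
  have e1 : ∑' i, ∑' j, Q i j + ∑' i, r i = 1 := by
    rw [← ENNReal.tsum_add, ← ha]; exact tsum_congr hra
  have e2 : ∑' i, ∑' j, Q i j + ∑' i, s i = 1 := by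
    rw [ENNReal.tsum_comm, ← ENNReal.tsum_add, ← hb]; exact tsum_congr hsb
  have hQ : ∑' i, ∑' j, Q i j ≠ ⊤ := by
    intro h; rw [h] at e1; simp at e1
  have hm : ∑' i, s i = ∑' i, r i := (ENNReal.add_right_inj hQ).1 (e2.trans e1.symm)
  set m := ∑' i, r i with hmdef
  have hmt : m ≠ ⊤ := by
    intro h; rw [h] at e1; simp at e1
  have hmr : ∀ i, r i * (m * m⁻¹) = r i := by
    intro i
    by_cases h0 : m = 0
    · have : r i = 0 := ENNReal.tsum_eq_zero.1 h0 i
      simp [this]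
    · rw [ENNReal.mul_inv_cancel h0 hmt, mul_one]
  have hms : ∀ i, s i * (m * m⁻¹) = s i := by
    intro i
    by_cases h0 : m = 0
    · have : s i = 0 := ENNReal.tsum_eq_zero.1 (hm.trans h0) i
      simp [this]
    · rw [ENNReal.mul_inv_cancel h0 hmt, mul_one]
  have k1 : ∀ i, ∑' j, r i * s j * m⁻¹ = r i := by
    intro i
    rw [ENNReal.tsum_mul_right, ENNReal.tsum_mul_left, hm, mul_assoc, hmr]
  have k2 : ∀ j, ∑' i, r i * s j * m⁻¹ = s j := by
    intro j
    rw [ENNReal.tsum_mul_right, ENNReal.tsum_mul_right, ← hmdef, mul_comm m, mul_assoc, hms]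
  refine ⟨fun i j => Q i j + r i * s j * m⁻¹, ?_, ?_, ?_⟩
  · intro i; rw [ENNReal.tsum_add, k1, hra]
  · intro i; rw [ENNReal.tsum_add, k2, hsb]
  · have : ∀ i j, (Q i j + r i * s j * m⁻¹) * c i j ≤
        Q i j * c i j + (φ i * (r i * s j * m⁻¹) + φ j * (r i * s j * m⁻¹)) := by
      intro i j
      rw [← add_mul (φ i), mul_comm (φ i + φ j), add_mul]
      gcongr
      exact hc i j
    refine (ENNReal.tsum_le_tsum fun i => ENNReal.tsum_le_tsum fun j => this i j).trans ?_
    simp_rw [ENNReal.tsum_add]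
    rw [ENNReal.tsum_comm (f := fun i j => φ j * (r i * s j * m⁻¹))]
    simp_rw [ENNReal.tsum_mul_left, k1, k2]
    rw [dF, ← add_assoc]

lemma exists_rat_approx (x : ℝ≥0∞) (hx : x ≠ ⊤) (δ : ℝ≥0∞) (hδ : δ ≠ 0) :
    ∃ q : ℚ, ENNReal.ofReal q ≤ x ∧ x - ENNReal.ofReal q ≤ δ := by
  by_cases h0 : x = 0
  · exact ⟨0, by simp, by simp [h0]⟩
  · have hlt : x - δ < x := ENNReal.sub_lt_self hx h0 hδ
    obtain ⟨q, hq0, h1, h2⟩ := ENNReal.lt_iff_exists_rat_btwn.1 hlt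
    exact ⟨q, h2.le, tsub_le_iff_tsub_le.1 h1.le⟩

noncomputable def Qof (q : ℕ × ℕ →₀ ℚ) (i j : ℕ) : ℝ≥0∞ := ENNReal.ofReal (q (i, j))

lemma exists_finsupp_aux (F : Finset (ℕ × ℕ)) (q0 : ℕ × ℕ → ℚ) :
    ∃ q : ℕ × ℕ →₀ ℚ, (∀ z ∈ F, Qof q z.1 z.2 = ENNReal.ofReal (q0 z)) ∧
      ∀ z, z ∉ F → Qof q z.1 z.2 = 0 := by
  refine ⟨Finsupp.onFinset F (fun z => if z ∈ F then q0 z else 0) ?_, ?_, ?_⟩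
  · intro z hz; by_contra h; simp [h] at hz
  · intro z hz; simp [Qof, hz]
  · intro z hz; simp [Qof, hz]

lemma dF_lower (c : ℕ → ℕ → ℝ≥0∞) (φ : ℕ → ℝ≥0∞) (g : ℕ → ℕ → ℝ≥0∞) (a b : ℕ → ℝ≥0∞)
    (hga : ∀ i, ∑' j, g i j = a i) (hgb : ∀ j, ∑' i, g i j = b j)
    (ha : ∀ i, a i ≠ ⊤) (hb : ∀ i, b i ≠ ⊤)
    (hφ : ∀ i, φ i ≠ ⊤)
    (hfin : ∑' i, ∑' j, (φ i + φ j) * g i j ≠ ⊤) (ε : ℝ≥0∞) (hε : ε ≠ 0) :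
    ∃ q : ℕ × ℕ →₀ ℚ, dvalid (Qof q) a b ∧
      dF c φ (Qof q) a b ≤ (∑' i, ∑' j, g i j * c i j) + ε := by
  have hε2 : ε / 2 ≠ 0 := by simp [hε]
  rw [← ENNReal.tsum_prod (f := fun i j => (φ i + φ j) * g i j)] at hfin
  have hgt : ∀ i j, g i j ≠ ⊤ := fun i j => ne_top_of_le_ne_top (ha i) (hga i ▸ ENNReal.le_tsum j)
  obtain ⟨F, hF⟩ : ∃ F : Finset (ℕ × ℕ),
      ∑' z : {z // z ∉ F}, (φ z.1.1 + φ z.1.2) * g z.1.1 z.1.2 ≤ ε / 2 := by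
    have := ENNReal.tendsto_tsum_compl_atTop_zero hfin
    exact (((ENNReal.tendsto_nhds_zero.1 this) (ε/2) (by positivity)).exists)
  set K := ∑ z ∈ F, (φ z.1 + φ z.2) with hK
  have hKt : K ≠ ⊤ := by
    rw [hK]; exact ENNReal.sum_ne_top.2 fun z _ => ENNReal.add_ne_top.2 ⟨hφ _, hφ _⟩
  obtain ⟨δ, hδ0, hδ⟩ : ∃ δ : ℝ≥0∞, δ ≠ 0 ∧ K * δ ≤ ε / 2 := by
    refine ⟨ε / 2 / K, ?_, ENNReal.mul_div_le⟩
    rw [Ne, ENNReal.div_eq_zero_iff]; push Not; exact ⟨hε2, hKt⟩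
  choose q0 hq1 hq2 using fun z : ℕ × ℕ => exists_rat_approx (g z.1 z.2) (hgt _ _) δ hδ0
  obtain ⟨q, hqF, hqF'⟩ := exists_finsupp_aux F q0
  have hle : ∀ i j, Qof q i j ≤ g i j := by
    intro i j
    by_cases h : (i, j) ∈ F
    · rw [hqF (i, j) h]; exact hq1 (i, j)
    · rw [hqF' (i, j) h]; exact zero_le
  have e1 : ∀ i, a i - ∑' j, Qof q i j = ∑' j, (g i j - Qof q i j) := by
    intro i
    rw [← hga, ENNReal.tsum_sub _ (fun j => hle i j)]
    exact ne_top_of_le_ne_top (ha i) (hga i ▸ ENNReal.tsum_le_tsum (hle i))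
  have e2 : ∀ j, b j - ∑' i, Qof q i j = ∑' i, (g i j - Qof q i j) := by
    intro j
    rw [← hgb, ENNReal.tsum_sub _ (fun i => hle i j)]
    exact ne_top_of_le_ne_top (hb j) (hgb j ▸ ENNReal.tsum_le_tsum (fun i => hle i j))
  refine ⟨q, ⟨fun i => hga i ▸ ENNReal.tsum_le_tsum (hle i),
    fun j => hgb j ▸ ENNReal.tsum_le_tsum (fun i => hle i j)⟩, ?_⟩
  have hterm : (∑' i, φ i * (a i - ∑' j, Qof q i j)) + ∑' j, φ j * (b j - ∑' i, Qof q i j)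
      = ∑' z : ℕ × ℕ, (φ z.1 + φ z.2) * (g z.1 z.2 - Qof q z.1 z.2) := by
    rw [ENNReal.tsum_prod (f := fun i j => (φ i + φ j) * (g i j - Qof q i j))]
    simp_rw [e1, e2, ← ENNReal.tsum_mul_left]
    rw [ENNReal.tsum_comm (f := fun j i => φ j * (g i j - Qof q i j)), ← ENNReal.tsum_add]
    simp_rw [← ENNReal.tsum_add, ← add_mul]
  have hsplit : ∑' z : ℕ × ℕ, (φ z.1 + φ z.2) * (g z.1 z.2 - Qof q z.1 z.2) ≤ ε / 2 + ε / 2 := by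
    have := Summable.tsum_add_tsum_compl (s := (F : Set (ℕ × ℕ))) (f := fun z : ℕ × ℕ =>
      (φ z.1 + φ z.2) * (g z.1 z.2 - Qof q z.1 z.2)) ENNReal.summable ENNReal.summable
    rw [← this, Finset.tsum_subtype' F (fun z : ℕ × ℕ =>
      (φ z.1 + φ z.2) * (g z.1 z.2 - Qof q z.1 z.2))]
    refine add_le_add ?_ ?_
    · refine le_trans ?_ hδ
      rw [hK, Finset.sum_mul]
      refine Finset.sum_le_sum fun z hz => ?_
      rw [hqF z hz]
      exact mul_le_mul_right (hq2 z) _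
    · refine le_trans (ENNReal.tsum_le_tsum fun z => ?_) hF
      exact mul_le_mul_right tsub_le_self _
  rw [dF, add_assoc, hterm]
  refine add_le_add ?_ (hsplit.trans (ENNReal.add_halves ε).le)
  exact ENNReal.tsum_le_tsum fun i => ENNReal.tsum_le_tsum fun j => mul_le_mul_left (hle i j) _

section Cells
variable {S : Type*} [MetricSpace S] [SecondCountableTopology S] [Nonempty S]
  [MeasurableSpace S] [BorelSpace S]

noncomputable def dlt (k : ℕ) : ℝ≥0∞ := ((k : ℝ≥0∞) + 1)⁻¹

lemma dlt_pos (k : ℕ) : 0 < dlt k := by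
  rw [dlt, ENNReal.inv_pos]; finiteness

lemma dlt_le (k : ℕ) : dlt k ≤ 1 := by
  rw [dlt, ENNReal.inv_le_one]; simp

lemma dlt_ne_top (k : ℕ) : dlt k ≠ ⊤ := ne_top_of_le_ne_top ENNReal.one_ne_top (dlt_le k)

lemma dlt_tendsto : Filter.Tendsto dlt Filter.atTop (nhds 0) := by
  have := (Filter.tendsto_add_atTop_iff_nat 1).2 ENNReal.tendsto_inv_nat_nhds_zero
  refine this.congr fun n => ?_
  simp [dlt]

lemma exists_near (k : ℕ) (x : S) : ∃ i, edist x (TopologicalSpace.denseSeq S i) < dlt k := by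
  obtain ⟨y, ⟨i, rfl⟩, hy⟩ := EMetric.mem_closure_iff.1
    ((TopologicalSpace.denseRange_denseSeq S) x) (dlt k) (dlt_pos k)
  exact ⟨i, hy⟩

open Classical in
noncomputable def cellIdx (k : ℕ) (x : S) : ℕ := Nat.find (exists_near k x)

lemma cellIdx_near (k : ℕ) (x : S) : edist x (TopologicalSpace.denseSeq S (cellIdx k x)) < dlt k := by
  classical
  exact Nat.find_spec (exists_near k x)

lemma measurable_cellIdx (k : ℕ) : Measurable (cellIdx k : S → ℕ) := by
  classical
  refine measurable_find _ fun i => ?_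
  exact measurableSet_lt (by fun_prop) measurable_const

variable (S) in
noncomputable def cst (p : ℝ) (k : ℕ) (i j : ℕ) : ℝ≥0∞ :=
  (edist (TopologicalSpace.denseSeq S i) (TopologicalSpace.denseSeq S j) + 2 * dlt k) ^ p

noncomputable def phi (p : ℝ) (x₀ : S) (k : ℕ) (i : ℕ) : ℝ≥0∞ :=
  2 ^ (p - 1) * (edist (TopologicalSpace.denseSeq S i) x₀ + dlt k) ^ p

lemma cst_le_phi (p : ℝ) (hp : 1 ≤ p) (x₀ : S) (k i j : ℕ) :
    cst S p k i j ≤ phi p x₀ k i + phi p x₀ k j := by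
  rw [cst, phi, phi, ← mul_add]
  refine le_trans ?_ (ENNReal.rpow_add_le_mul_rpow_add_rpow _ _ hp)
  refine ENNReal.rpow_le_rpow ?_ (by linarith)
  calc _ ≤ edist (TopologicalSpace.denseSeq S i) x₀ + edist (TopologicalSpace.denseSeq S j) x₀
        + 2 * dlt k := by
        gcongr
        exact edist_triangle_right _ _ _
    _ = _ := by ring

lemma phi_ne_top (p : ℝ) (hp : 1 ≤ p) (x₀ : S) (k i : ℕ) : phi p x₀ k i ≠ ⊤ := by
  have := dlt_ne_top k
  rw [phi]
  refine ENNReal.mul_ne_top (ENNReal.rpow_ne_top_of_nonneg (by linarith) (by simp))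
    (ENNReal.rpow_ne_top_of_nonneg (by linarith) (ENNReal.add_ne_top.2 ⟨edist_ne_top _ _, this⟩))

lemma edist_le_cst (p : ℝ) (hp : 1 ≤ p) (k : ℕ) (x y : S) :
    edist x y ^ p ≤ cst S p k (cellIdx k x) (cellIdx k y) := by
  rw [cst]
  refine ENNReal.rpow_le_rpow ?_ (by linarith)
  have h1 := (cellIdx_near k x).le
  have h2 := (cellIdx_near k y).le
  calc _ ≤ edist x (TopologicalSpace.denseSeq S (cellIdx k x)) +
        edist (TopologicalSpace.denseSeq S (cellIdx k x)) (TopologicalSpace.denseSeq S (cellIdx k y))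
        + edist (TopologicalSpace.denseSeq S (cellIdx k y)) y := edist_triangle4 _ _ _ _
    _ ≤ dlt k + edist (TopologicalSpace.denseSeq S (cellIdx k x)) (TopologicalSpace.denseSeq S (cellIdx k y)) + dlt k := by
        rw [edist_comm _ y]; gcongr
    _ = _ := by ring

lemma cst_le_edist (p : ℝ) (hp : 1 ≤ p) (k : ℕ) (x y : S) :
    cst S p k (cellIdx k x) (cellIdx k y) ≤ (edist x y + 4 * dlt k) ^ p := by
  rw [cst]
  refine ENNReal.rpow_le_rpow ?_ (by linarith)
  have h1 := (cellIdx_near k x).le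
  have h2 := (cellIdx_near k y).le
  calc _ ≤ edist (TopologicalSpace.denseSeq S (cellIdx k x)) x +
        edist x y + edist y (TopologicalSpace.denseSeq S (cellIdx k y)) + 2 * dlt k := by
        gcongr; exact edist_triangle4 _ _ _ _
    _ ≤ dlt k + edist x y + dlt k + 2 * dlt k := by
        rw [edist_comm _ x]; gcongr
    _ = _ := by ring

lemma phi_le (p : ℝ) (hp : 1 ≤ p) (x₀ : S) (k : ℕ) (x : S) :
    phi p x₀ k (cellIdx k x) ≤ 2 ^ (p - 1) * (edist x x₀ + 2) ^ p := by
  rw [phi]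
  refine mul_le_mul_right (ENNReal.rpow_le_rpow ?_ (by linarith)) _
  have h1 := (cellIdx_near k x).le
  have h2 := dlt_le k
  calc _ ≤ edist (TopologicalSpace.denseSeq S (cellIdx k x)) x + edist x x₀ + dlt k := by
        gcongr; exact edist_triangle _ _ _
    _ ≤ 1 + edist x x₀ + 1 := by
        rw [edist_comm _ x]; gcongr; exact h1.trans h2
    _ = _ := by ring

open Classical in
noncomputable def vterm (p : ℝ) (x₀ : S) (k : ℕ) (q : ℕ × ℕ →₀ ℚ) (z : Measure S × Measure S) : ℝ≥0∞ :=
  if dvalid (Qof q) (fun i => z.1 (cellIdx k ⁻¹' {i})) (fun i => z.2 (cellIdx k ⁻¹' {i})) then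
    dF (cst S p k) (phi p x₀ k) (Qof q) (fun i => z.1 (cellIdx k ⁻¹' {i}))
      (fun i => z.2 (cellIdx k ⁻¹' {i})) else ⊤

noncomputable def VV (p : ℝ) (x₀ : S) (z : Measure S × Measure S) : ℝ≥0∞ :=
  ⨅ k : ℕ, ⨅ q : ℕ × ℕ →₀ ℚ, vterm p x₀ k q z

lemma measurable_VV (p : ℝ) (x₀ : S) : Measurable (VV p x₀) := by
  refine Measurable.iInf fun k => Measurable.iInf fun q => ?_
  have hA : ∀ i, MeasurableSet (cellIdx k ⁻¹' {i} : Set S) :=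
    fun i => measurable_cellIdx k (measurableSet_singleton i)
  have h1 : ∀ i, Measurable fun z : Measure S × Measure S => z.1 (cellIdx k ⁻¹' {i}) :=
    fun i => (Measure.measurable_coe (hA i)).comp measurable_fst
  have h2 : ∀ i, Measurable fun z : Measure S × Measure S => z.2 (cellIdx k ⁻¹' {i}) :=
    fun i => (Measure.measurable_coe (hA i)).comp measurable_snd
  unfold vterm
  refine Measurable.ite ?_ ?_ measurable_const
  · simp only [dvalid, Set.ofPred_and, Set.ofPred_forall]
    exact (MeasurableSet.iInter fun i => measurableSet_le measurable_const (h1 i)).inter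
      (MeasurableSet.iInter fun i => measurableSet_le measurable_const (h2 i))
  · unfold dF
    refine (measurable_const.add (Measurable.tsum fun i => ?_)).add
      (Measurable.tsum fun i => ?_)
    · exact ((h1 i).sub measurable_const).const_mul _
    · exact ((h2 i).sub measurable_const).const_mul _

lemma tsum_cell (μ : Measure S) (k : ℕ) (E : Set S) (hE : MeasurableSet E) :
    ∑' i, μ (cellIdx k ⁻¹' {i} ∩ E) = μ E := by
  rw [← measure_iUnion]
  · congr 1; ext x; simp
  · intro i j hij
    refine Set.disjoint_left.2 fun x hx hy => hij ?_
    have h1 : cellIdx k x = i := hx.1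
    have h2 : cellIdx k x = j := hy.1
    exact h1.symm.trans h2
  · intro i; exact (measurable_cellIdx k (measurableSet_singleton i)).inter hE

lemma coupling_of_cells (p : ℝ) (hp : 1 ≤ p) (μ ν : Measure S) [IsProbabilityMeasure μ]
    [IsProbabilityMeasure ν] (k : ℕ) (g : ℕ → ℕ → ℝ≥0∞)
    (h1 : ∀ i, ∑' j, g i j = μ (cellIdx k ⁻¹' {i})) (h2 : ∀ j, ∑' i, g i j = ν (cellIdx k ⁻¹' {j})) :
    ∃ γ : Measure (S × S), γ.map Prod.fst = μ ∧ γ.map Prod.snd = ν ∧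
      ∫⁻ z, edist z.1 z.2 ^ p ∂γ ≤ ∑' i, ∑' j, g i j * cst S p k i j := by
  set A : ℕ → Set S := fun i => cellIdx k ⁻¹' {i} with hAdef
  have hA : ∀ i, MeasurableSet (A i) :=
    fun i => measurable_cellIdx k (measurableSet_singleton i)
  have hg1 : ∀ i j, g i j ≤ μ (A i) := fun i j => h1 i ▸ ENNReal.le_tsum j
  have hg2 : ∀ i j, g i j ≤ ν (A j) := fun i j => h2 j ▸ ENNReal.le_tsum (f := fun i => g i j) i
  let w : ℕ → ℕ → ℝ≥0∞ := fun i j => g i j * (μ (A i))⁻¹ * (ν (A j))⁻¹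
  have hw1 : ∀ i j, w i j * ν (A j) = g i j * (μ (A i))⁻¹ := by
    intro i j
    by_cases h0 : ν (A j) = 0
    · have : g i j = 0 := le_antisymm (h0 ▸ hg2 i j) zero_le
      simp [this, h0]
    · simp only [w]
      rw [mul_assoc, ENNReal.inv_mul_cancel h0 (measure_ne_top _ _), mul_one]
  have hw2 : ∀ i j, w i j * μ (A i) = g i j * (ν (A j))⁻¹ := by
    intro i j
    by_cases h0 : μ (A i) = 0
    · have : g i j = 0 := le_antisymm (h0 ▸ hg1 i j) zero_le
      simp [this, h0]
    · simp only [w]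
      rw [mul_right_comm, mul_assoc (g i j), ENNReal.inv_mul_cancel h0 (measure_ne_top _ _), mul_one]
  refine ⟨Measure.sum fun i => Measure.sum fun j => w i j • (μ.restrict (A i)).prod (ν.restrict (A j)),
    ?_, ?_, ?_⟩
  · ext E hE
    rw [Measure.map_apply measurable_fst hE, Measure.sum_apply _ (measurable_fst hE)]
    simp_rw [Measure.sum_apply _ (measurable_fst hE)]
    rw [← tsum_cell μ k E hE]
    refine tsum_congr fun i => ?_
    have : ∀ j, (w i j • (μ.restrict (A i)).prod (ν.restrict (A j))) (Prod.fst ⁻¹' E)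
        = g i j * (μ (A i))⁻¹ * μ (A i ∩ E) := by
      intro j
      rw [← Set.prod_univ, Measure.smul_apply, Measure.prod_prod, Measure.restrict_apply_univ,
        Measure.restrict_apply hE, smul_eq_mul, mul_comm (μ _), ← mul_assoc, hw1, Set.inter_comm]
    simp_rw [this]
    rw [ENNReal.tsum_mul_right, ENNReal.tsum_mul_right, h1]
    by_cases h0 : μ (A i) = 0
    · have : μ (A i ∩ E) = 0 := measure_mono_null Set.inter_subset_left h0
      rw [this, mul_zero]
    · rw [ENNReal.mul_inv_cancel h0 (measure_ne_top _ _), one_mul]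
  · ext E hE
    rw [Measure.map_apply measurable_snd hE, Measure.sum_apply _ (measurable_snd hE)]
    simp_rw [Measure.sum_apply _ (measurable_snd hE)]
    rw [← tsum_cell ν k E hE, ENNReal.tsum_comm]
    refine tsum_congr fun j => ?_
    have : ∀ i, (w i j • (μ.restrict (A i)).prod (ν.restrict (A j))) (Prod.snd ⁻¹' E)
        = g i j * (ν (A j))⁻¹ * ν (A j ∩ E) := by
      intro i
      rw [← Set.univ_prod, Measure.smul_apply, Measure.prod_prod, Measure.restrict_apply_univ,
        Measure.restrict_apply hE, smul_eq_mul, ← mul_assoc, hw2, Set.inter_comm]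
    simp_rw [this]
    rw [ENNReal.tsum_mul_right, ENNReal.tsum_mul_right, h2]
    by_cases h0 : ν (A j) = 0
    · have : ν (A j ∩ E) = 0 := measure_mono_null Set.inter_subset_left h0
      rw [this, mul_zero]
    · rw [ENNReal.mul_inv_cancel h0 (measure_ne_top _ _), one_mul]
  · rw [lintegral_sum_measure]
    refine ENNReal.tsum_le_tsum fun i => ?_
    rw [lintegral_sum_measure]
    refine ENNReal.tsum_le_tsum fun j => ?_
    rw [lintegral_smul_measure, Measure.prod_restrict]
    have : ∫⁻ z in A i ×ˢ A j, edist z.1 z.2 ^ p ∂(μ.prod ν) ≤ cst S p k i j * (μ (A i) * ν (A j)) := by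
      rw [← Measure.prod_prod, ← setLIntegral_const]
      refine setLIntegral_mono' ((hA i).prod (hA j)) fun z hz => ?_
      have e1 : cellIdx k z.1 = i := hz.1
      have e2 : cellIdx k z.2 = j := hz.2
      have := edist_le_cst p hp k z.1 z.2
      rwa [e1, e2] at this
    calc _ ≤ w i j * (cst S p k i j * (μ (A i) * ν (A j))) := by
          rw [smul_eq_mul]; gcongr
      _ = (w i j * ν (A j)) * μ (A i) * cst S p k i j := by ring
      _ = g i j * ((μ (A i))⁻¹ * μ (A i)) * cst S p k i j := by rw [hw1]; ring
      _ ≤ g i j * 1 * cst S p k i j := by gcongr; exact ENNReal.inv_mul_le_one _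
      _ = _ := by rw [mul_one]

/-- Upper bound direction. -/
lemma exists_coupling_le (p : ℝ) (hp : 1 ≤ p) (x₀ : S) (μ ν : Measure S) [IsProbabilityMeasure μ]
    [IsProbabilityMeasure ν] (k : ℕ) (q : ℕ × ℕ →₀ ℚ) (h : vterm p x₀ k q (μ, ν) ≠ ⊤) :
    ∃ γ : Measure (S × S), γ.map Prod.fst = μ ∧ γ.map Prod.snd = ν ∧
      ∫⁻ z, edist z.1 z.2 ^ p ∂γ ≤ vterm p x₀ k q (μ, ν) := by
  unfold vterm at h ⊢
  split_ifs at h ⊢ with hv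
  · have hs : ∀ μ : Measure S, IsProbabilityMeasure μ → ∑' i, μ (cellIdx k ⁻¹' {i}) = 1 := by
      intro μ _
      have := tsum_cell μ k Set.univ MeasurableSet.univ
      simpa using this
    obtain ⟨g, h1, h2, h3⟩ := dF_upper (cst S p k) (phi p x₀ k) (Qof q) _ _ (hs μ inferInstance)
      (hs ν inferInstance) (cst_le_phi p hp x₀ k) hv
    obtain ⟨γ, k1, k2, k3⟩ := coupling_of_cells p hp μ ν k g h1 h2
    exact ⟨γ, k1, k2, k3.trans h3⟩
  · exact absurd rfl h

lemma lint_shift_ne_top {X : Type*} [MeasurableSpace X] (μ : Measure X) [IsFiniteMeasure μ] (p : ℝ) (hp : 1 ≤ p) (f : X → ℝ≥0∞)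
    (hf : ∫⁻ x, f x ^ p ∂μ ≠ ⊤) (K : ℝ≥0∞) (hK : K ≠ ⊤) :
    ∫⁻ x, (f x + K) ^ p ∂μ ≠ ⊤ := by
  have h2 : (2 : ℝ≥0∞) ^ (p - 1) ≠ ⊤ := ENNReal.rpow_ne_top_of_nonneg (by linarith) (by simp)
  refine ne_top_of_le_ne_top ?_ (lintegral_mono fun x => ENNReal.rpow_add_le_mul_rpow_add_rpow _ _ hp)
  rw [lintegral_const_mul' _ _ h2, lintegral_add_right _ measurable_const, lintegral_const]
  refine ENNReal.mul_ne_top h2 (ENNReal.add_ne_top.2 ⟨hf, ENNReal.mul_ne_top ?_ (measure_ne_top _ _)⟩)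
  exact ENNReal.rpow_ne_top_of_nonneg (by linarith) hK

lemma coupling_cost_ne_top (p : ℝ) (hp : 1 ≤ p) (x₀ : S) (μ ν : Measure S) 
    (hμ : ∫⁻ x, edist x x₀ ^ p ∂μ ≠ ⊤) (hν : ∫⁻ x, edist x x₀ ^ p ∂ν ≠ ⊤) (γ : Measure (S × S))
    (h1 : γ.map Prod.fst = μ) (h2 : γ.map Prod.snd = ν) :
    ∫⁻ z, edist z.1 z.2 ^ p ∂γ ≠ ⊤ := by
  have h2' : (2 : ℝ≥0∞) ^ (p - 1) ≠ ⊤ := ENNReal.rpow_ne_top_of_nonneg (by linarith) (by simp)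
  have : ∀ z : S × S, edist z.1 z.2 ^ p ≤ 2 ^ (p - 1) * (edist z.1 x₀ ^ p + edist z.2 x₀ ^ p) := by
    intro z
    refine le_trans ?_ (ENNReal.rpow_add_le_mul_rpow_add_rpow _ _ hp)
    gcongr
    exact edist_triangle_right _ _ _
  refine ne_top_of_le_ne_top ?_ (lintegral_mono this)
  have hm : Measurable fun x : S => edist x x₀ ^ p := by fun_prop
  rw [lintegral_const_mul' _ _ h2', lintegral_add_left (by fun_prop)]
  rw [← h1, lintegral_map hm measurable_fst] at hμ
  rw [← h2, lintegral_map hm measurable_snd] at hν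
  exact ENNReal.mul_ne_top h2' (ENNReal.add_ne_top.2 ⟨hμ, hν⟩)

lemma lint_cells (k : ℕ) (γ : Measure (S × S)) (f : ℕ → ℕ → ℝ≥0∞) :
    ∫⁻ z, f (cellIdx k z.1) (cellIdx k z.2) ∂γ =
      ∑' i, ∑' j, f i j * γ ((cellIdx k ⁻¹' {i}) ×ˢ (cellIdx k ⁻¹' {j})) := by
  have hT : Measurable fun z : S × S => (cellIdx k z.1, cellIdx k z.2) :=
    ((measurable_cellIdx k).comp measurable_fst).prodMk ((measurable_cellIdx k).comp measurable_snd)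
  have := lintegral_map (μ := γ) (f := fun z : ℕ × ℕ => f z.1 z.2) (measurable_of_countable _) hT
  rw [← this, lintegral_countable', ENNReal.tsum_prod']
  refine tsum_congr fun i => tsum_congr fun j => ?_
  rw [Measure.map_apply hT (measurableSet_singleton _)]
  congr 2
  ext z; simp [Prod.ext_iff]

lemma vterm_le (p : ℝ) (hp : 1 ≤ p) (x₀ : S) (μ ν : Measure S) [IsProbabilityMeasure μ]
    [IsProbabilityMeasure ν]
    (hμ : ∫⁻ x, edist x x₀ ^ p ∂μ ≠ ⊤) (hν : ∫⁻ x, edist x x₀ ^ p ∂ν ≠ ⊤) (γ : Measure (S × S))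
    (h1 : γ.map Prod.fst = μ) (h2 : γ.map Prod.snd = ν) (k : ℕ) (ε : ℝ≥0∞) (hε : ε ≠ 0) :
    ∃ q, vterm p x₀ k q (μ, ν) ≤ ∫⁻ z, (edist z.1 z.2 + 4 * dlt k) ^ p ∂γ + ε := by
  have hA : ∀ i, MeasurableSet (cellIdx k ⁻¹' {i} : Set S) :=
    fun i => measurable_cellIdx k (measurableSet_singleton i)
  set g : ℕ → ℕ → ℝ≥0∞ := fun i j => γ ((cellIdx k ⁻¹' {i}) ×ˢ (cellIdx k ⁻¹' {j})) with hg
  have hga : ∀ i, ∑' j, g i j = μ (cellIdx k ⁻¹' {i}) := by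
    intro i
    rw [← h1, Measure.map_apply measurable_fst (hA i)]
    have : Prod.fst ⁻¹' (cellIdx k ⁻¹' {i}) = ⋃ j, ((cellIdx k ⁻¹' {i} : Set S) ×ˢ (cellIdx k ⁻¹' {j} : Set S)) := by
      ext z; simp
    rw [this, measure_iUnion]
    · intro j j' hj
      refine Set.disjoint_left.2 fun z hz hz' => hj ?_
      exact (show cellIdx k z.2 = j from hz.2).symm.trans hz'.2
    · intro j; exact (hA i).prod (hA j)
  have hgb : ∀ j, ∑' i, g i j = ν (cellIdx k ⁻¹' {j}) := by
    intro j
    rw [← h2, Measure.map_apply measurable_snd (hA j)]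
    have : Prod.snd ⁻¹' (cellIdx k ⁻¹' {j}) = ⋃ i, ((cellIdx k ⁻¹' {i} : Set S) ×ˢ (cellIdx k ⁻¹' {j} : Set S)) := by
      ext z; simp
    rw [this, measure_iUnion]
    · intro i i' hi
      refine Set.disjoint_left.2 fun z hz hz' => hi ?_
      exact (show cellIdx k z.1 = i from hz.1).symm.trans hz'.1
    · intro i; exact (hA i).prod (hA j)
  have hphi : ∀ μ : Measure S, IsProbabilityMeasure μ → ∫⁻ x, edist x x₀ ^ p ∂μ ≠ ⊤ →
      ∫⁻ x, phi p x₀ k (cellIdx k x) ∂μ ≠ ⊤ := by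
    intro μ _ hμ
    refine ne_top_of_le_ne_top ?_ (lintegral_mono fun x => phi_le p hp x₀ k x)
    have h2' : (2 : ℝ≥0∞) ^ (p - 1) ≠ ⊤ := ENNReal.rpow_ne_top_of_nonneg (by linarith) (by simp)
    rw [lintegral_const_mul' _ _ h2']
    exact ENNReal.mul_ne_top h2' (lint_shift_ne_top μ p hp _ hμ 2 (by simp))
  have hmphi : Measurable fun x : S => phi p x₀ k (cellIdx k x) :=
    (measurable_of_countable (phi p x₀ k)).comp (measurable_cellIdx k)
  obtain ⟨q, hq, hq'⟩ := dF_lower (cst S p k) (phi p x₀ k) g _ _ hga hgb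
    (fun i => measure_ne_top _ _) (fun i => measure_ne_top _ _) (phi_ne_top p hp x₀ k) (by
      rw [← lint_cells k γ (fun i j => phi p x₀ k i + phi p x₀ k j)]
      rw [lintegral_add_left (f := fun z : S × S => phi p x₀ k (cellIdx k z.1)) (hmphi.comp measurable_fst)]
      refine ENNReal.add_ne_top.2 ⟨?_, ?_⟩
      · rw [← lintegral_map hmphi measurable_fst, h1]; exact hphi μ inferInstance hμ
      · rw [← lintegral_map hmphi measurable_snd, h2]; exact hphi ν inferInstance hν) ε hε
  refine ⟨q, ?_⟩
  rw [vterm, if_pos hq]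
  refine hq'.trans ?_
  gcongr
  have := lint_cells k γ (cst S p k)
  simp_rw [mul_comm (g _ _)]
  rw [← this]
  exact lintegral_mono fun z => cst_le_edist p hp k z.1 z.2

lemma VV_le (p : ℝ) (hp : 1 ≤ p) (x₀ : S) (μ ν : Measure S) [IsProbabilityMeasure μ]
    [IsProbabilityMeasure ν]
    (hμ : ∫⁻ x, edist x x₀ ^ p ∂μ ≠ ⊤) (hν : ∫⁻ x, edist x x₀ ^ p ∂ν ≠ ⊤) (γ : Measure (S × S))
    (h1 : γ.map Prod.fst = μ) (h2 : γ.map Prod.snd = ν) :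
    VV p x₀ (μ, ν) ≤ ∫⁻ z, edist z.1 z.2 ^ p ∂γ := by
  have hk : ∀ k, VV p x₀ (μ, ν) ≤ ∫⁻ z, (edist z.1 z.2 + 4 * dlt k) ^ p ∂γ := by
    intro k
    refine le_of_forall_pos_le_add fun ε hε => ?_
    obtain ⟨q, hq⟩ := vterm_le p hp x₀ μ ν hμ hν γ h1 h2 k ε hε.ne'
    exact (iInf_le_of_le k (iInf_le _ q)).trans hq
  have hfin := coupling_cost_ne_top p hp x₀ μ ν hμ hν γ h1 h2
  have : IsFiniteMeasure γ := by
    refine ⟨?_⟩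
    have : γ Set.univ = μ Set.univ := by
      rw [← h1, Measure.map_apply measurable_fst MeasurableSet.univ]; simp
    rw [this]; exact measure_lt_top _ _
  have hlim : Filter.Tendsto (fun k => ∫⁻ z, (edist z.1 z.2 + 4 * dlt k) ^ p ∂γ) Filter.atTop
      (nhds (∫⁻ z, edist z.1 z.2 ^ p ∂γ)) := by
    refine tendsto_lintegral_of_dominated_convergence (fun z => (edist z.1 z.2 + 4) ^ p)
      (fun k => by fun_prop) (fun k => ?_) (lint_shift_ne_top γ p hp _ hfin 4 (by simp)) ?_
    · refine Filter.Eventually.of_forall fun z => ?_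
      have := dlt_le k
      show (edist z.1 z.2 + 4 * dlt k) ^ p ≤ _
      refine ENNReal.rpow_le_rpow (add_le_add le_rfl ?_) (by linarith)
      calc 4 * dlt k ≤ 4 * 1 := by gcongr
        _ = 4 := mul_one _
    · refine Filter.Eventually.of_forall fun z => ?_
      have h4 : Filter.Tendsto (fun k => edist z.1 z.2 + 4 * dlt k) Filter.atTop
          (nhds (edist z.1 z.2 + 4 * 0)) :=
        tendsto_const_nhds.add (ENNReal.Tendsto.const_mul dlt_tendsto (Or.inr (by simp)))
      rw [mul_zero, add_zero] at h4
      exact (ENNReal.continuous_rpow_const.tendsto _).comp h4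
  exact ge_of_tendsto' hlim hk

end Cells

section Wass
variable {S : Type*} [MetricSpace S] [SecondCountableTopology S] [Nonempty S]
  [MeasurableSpace S] [BorelSpace S]

def GG (p : ℝ) (x₀ : S) : Set (Measure S) :=
  {μ | μ Set.univ = 1 ∧ ∫⁻ x, edist x x₀ ^ p ∂μ ≠ ⊤}

lemma measurableSet_GG (p : ℝ) (x₀ : S) : MeasurableSet (GG p x₀) := by
  have h1 : Measurable fun μ : Measure S => μ Set.univ := Measure.measurable_coe MeasurableSet.univ
  have h2 : Measurable fun μ : Measure S => ∫⁻ x, edist x x₀ ^ p ∂μ :=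
    Measure.measurable_lintegral (by fun_prop)
  exact (h1 (measurableSet_singleton 1)).inter (h2 (measurableSet_singleton ⊤).compl)

lemma edist_rpow_eq (p : ℝ) (hp : 1 ≤ p) (x y : S) : edist x y ^ p = ENNReal.ofReal (dist x y ^ p) := by
  rw [edist_dist, ENNReal.ofReal_rpow_of_nonneg dist_nonneg (by linarith)]

lemma MemWp.mem_GG {p : ℝ} (hp : 1 ≤ p) (x₀ : S) {μ : Measure S} (h : MemWp p μ) : μ ∈ GG p x₀ := by
  obtain ⟨h1, x, hx⟩ := h
  refine ⟨measure_univ, ?_⟩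
  have h0 : ∫⁻ y, edist y x ^ p ∂μ ≠ ⊤ := by
    simp_rw [edist_rpow_eq p hp]
    exact (Integrable.lintegral_lt_top hx).ne
  refine ne_top_of_le_ne_top (lint_shift_ne_top μ p hp _ h0 (edist x x₀) (edist_ne_top _ _))
    (lintegral_mono fun y => ENNReal.rpow_le_rpow (edist_triangle _ _ _) (by linarith))

lemma wassW_nonneg {X : Type*} [MeasurableSpace X] (c : X → X → ℝ) (hc : ∀ x y, 0 ≤ c x y) (p : ℝ)
    (μ ν : Measure X) : 0 ≤ wassW c p μ ν := by
  refine Real.sInf_nonneg ?_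
  rintro r ⟨γ, -, -, rfl⟩
  exact Real.rpow_nonneg (integral_nonneg fun z => Real.rpow_nonneg (hc _ _) _) _

lemma wassW_le {X : Type*} [MeasurableSpace X] (c : X → X → ℝ) (hc : ∀ x y, 0 ≤ c x y) (p : ℝ)
    (μ ν : Measure X) (γ : Measure (X × X)) (h1 : γ.map Prod.fst = μ) (h2 : γ.map Prod.snd = ν) :
    wassW c p μ ν ≤ (∫ z, c z.1 z.2 ^ p ∂γ) ^ (1 / p) := by
  refine csInf_le ⟨0, ?_⟩ ⟨γ, h1, h2, rfl⟩
  rintro r ⟨γ, -, -, rfl⟩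
  exact Real.rpow_nonneg (integral_nonneg fun z => Real.rpow_nonneg (hc _ _) _) _

lemma integral_dist_eq (p : ℝ) (hp : 1 ≤ p) (γ : Measure (S × S)) :
    ∫ z, dist z.1 z.2 ^ p ∂γ = (∫⁻ z, edist z.1 z.2 ^ p ∂γ).toReal := by
  rw [integral_eq_lintegral_of_nonneg_ae]
  · simp_rw [edist_rpow_eq p hp]
  · exact Filter.Eventually.of_forall fun z => Real.rpow_nonneg dist_nonneg _
  · have : Measurable fun z : S × S => dist z.1 z.2 ^ p := by fun_prop
    exact this.aestronglyMeasurable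

lemma wassW_eq_VV {p : ℝ} (hp : 1 ≤ p) (x₀ : S) {μ ν : Measure S} (hμ : μ ∈ GG p x₀)
    (hν : ν ∈ GG p x₀) :
    ENNReal.ofReal (wassW (fun u v => dist u v) p μ ν) ^ p = VV p x₀ (μ, ν) := by
  obtain ⟨hμ1, hμ2⟩ := hμ
  obtain ⟨hν1, hν2⟩ := hν
  have : IsProbabilityMeasure μ := ⟨hμ1⟩
  have : IsProbabilityMeasure ν := ⟨hν1⟩
  have hp0 : 0 < p := by linarith
  have hd : ∀ x y : S, 0 ≤ dist x y := fun _ _ => dist_nonneg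
  have hW := wassW_nonneg (fun u v : S => dist u v) hd p μ ν
  refine le_antisymm ?_ ?_
  · refine le_iInf fun k => le_iInf fun q => ?_
    by_cases ht : vterm p x₀ k q (μ, ν) = ⊤
    · rw [ht]; exact le_top
    obtain ⟨γ, h1, h2, h3⟩ := exists_coupling_le p hp x₀ μ ν k q ht
    refine le_trans ?_ h3
    have := wassW_le (fun u v : S => dist u v) hd p μ ν γ h1 h2
    rw [integral_dist_eq p hp] at this
    calc _ ≤ ENNReal.ofReal ((∫⁻ z, edist z.1 z.2 ^ p ∂γ).toReal ^ (1 / p)) ^ p := by gcongr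
      _ = _ := by
        rw [ENNReal.ofReal_rpow_of_nonneg (by positivity) hp0.le, ← Real.rpow_mul (by positivity),
          one_div_mul_cancel hp0.ne', Real.rpow_one, ENNReal.ofReal_toReal]
        exact ne_top_of_le_ne_top ht h3
  · have hne : VV p x₀ (μ, ν) ≠ ⊤ := by
      have h := VV_le p hp x₀ μ ν hμ2 hν2 (μ.prod ν) (by simp) (by simp)
      exact ne_top_of_le_ne_top (coupling_cost_ne_top p hp x₀ μ ν hμ2 hν2 (μ.prod ν) (by simp) (by simp)) h
    have hle : (VV p x₀ (μ, ν)).toReal ^ (1 / p) ≤ wassW (fun u v => dist u v) p μ ν := by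
      refine le_csInf ⟨_, μ.prod ν, by simp, by simp, rfl⟩ ?_
      rintro r ⟨γ, h1, h2, rfl⟩
      rw [integral_dist_eq p hp]
      have := VV_le p hp x₀ μ ν hμ2 hν2 γ h1 h2
      have hf := coupling_cost_ne_top p hp x₀ μ ν hμ2 hν2 γ h1 h2
      gcongr
    calc VV p x₀ (μ, ν) = ENNReal.ofReal ((VV p x₀ (μ, ν)).toReal ^ (1 / p)) ^ p := by
          rw [ENNReal.ofReal_rpow_of_nonneg (by positivity) hp0.le, ← Real.rpow_mul (by positivity),
            one_div_mul_cancel hp0.ne', Real.rpow_one, ENNReal.ofReal_toReal hne]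
      _ ≤ _ := by gcongr

/-- the outer Wasserstein distance to a point mass -/
lemma wassW_outer_le {p : ℝ} (hp : 1 ≤ p) (x₀ : S) (π : Measure (Measure S)) [IsProbabilityMeasure π]
    (hπ : ∀ᵐ μ ∂π, μ ∈ GG p x₀) (m : Measure S) (hm : m ∈ GG p x₀) :
    ENNReal.ofReal (wassW (fun μ ν => wassW (fun u v => dist u v) p μ ν) p π (Measure.dirac m))
      ≤ (∫⁻ μ, VV p x₀ (μ, m) ∂π) ^ (1 / p) := by
  have hp0 : 0 < p := by linarith
  have hd : ∀ x y : S, 0 ≤ dist x y := fun _ _ => dist_nonneg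
  have hW := wassW_nonneg (fun u v : S => dist u v) hd p
  have h := wassW_le (fun μ ν => wassW (fun u v : S => dist u v) p μ ν) hW p π (Measure.dirac m)
    (π.prod (Measure.dirac m)) (by simp) (by simp)
  have hae : ∀ᵐ z ∂(π.prod (Measure.dirac m)), z.1 ∈ GG p x₀ ∧ z.2 ∈ GG p x₀ := by
    have a1 : ∀ᵐ z ∂(π.prod (Measure.dirac m)), z.1 ∈ GG p x₀ :=
      Measure.quasiMeasurePreserving_fst.ae hπ
    have a2 : ∀ᵐ z ∂(π.prod (Measure.dirac m)), z.2 ∈ GG p x₀ :=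
      Measure.quasiMeasurePreserving_snd.ae ((ae_dirac_iff (measurableSet_GG p x₀)).2 hm)
    exact a1.and a2
  have e1 : ∫ z, wassW (fun u v : S => dist u v) p z.1 z.2 ^ p ∂(π.prod (Measure.dirac m))
      = ∫ z, (VV p x₀ z).toReal ∂(π.prod (Measure.dirac m)) := by
    refine integral_congr_ae ?_
    filter_upwards [hae] with z hz
    rw [← Prod.mk.eta (p := z), ← wassW_eq_VV hp x₀ hz.1 hz.2,
      ENNReal.ofReal_rpow_of_nonneg (hW _ _) hp0.le, ENNReal.toReal_ofReal (Real.rpow_nonneg (hW _ _) _)]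
  have e2 : ∫ z, (VV p x₀ z).toReal ∂(π.prod (Measure.dirac m))
      = (∫⁻ z, VV p x₀ z ∂(π.prod (Measure.dirac m))).toReal := by
    refine integral_toReal (measurable_VV p x₀).aemeasurable ?_
    filter_upwards [hae] with z hz
    rw [← Prod.mk.eta (p := z), ← wassW_eq_VV hp x₀ hz.1 hz.2]
    exact ENNReal.rpow_lt_top_of_nonneg hp0.le ENNReal.ofReal_ne_top
  have e3 : ∫⁻ z, VV p x₀ z ∂(π.prod (Measure.dirac m)) = ∫⁻ μ, VV p x₀ (μ, m) ∂π := by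
    rw [lintegral_prod _ (measurable_VV p x₀).aemeasurable]
    refine lintegral_congr fun μ => ?_
    exact lintegral_dirac' _ ((measurable_VV p x₀).comp measurable_prodMk_left)
  rw [e1, e2, e3] at h
  refine (ENNReal.ofReal_le_ofReal h).trans ?_
  rw [← ENNReal.ofReal_rpow_of_nonneg (by positivity) (by positivity)]
  gcongr
  exact ENNReal.ofReal_toReal_le

end Wass

/-- Blackwell-Dubins type lemma. -/
lemma limsup_le_of_cond {Ω : Type*} {m0 : MeasurableSpace Ω} (ρ : Measure Ω) [IsProbabilityMeasure ρ]
    (ℱ : Filtration ℕ m0) (hsup : ⨆ n, ℱ n = m0) (X g : ℕ → Ω → ℝ≥0∞)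
    (hX : ∀ n, Measurable (X n)) (hg : ∀ n, Measurable[ℱ n] (g n))
    (hgX : ∀ n A, MeasurableSet[ℱ n] A → ∫⁻ ω in A, g n ω ∂ρ = ∫⁻ ω in A, X n ω ∂ρ)
    (hfin : ∫⁻ ω, ⨆ n, X n ω ∂ρ ≠ ⊤) :
    ∀ᵐ ω ∂ρ, Filter.limsup (fun n => g n ω) Filter.atTop ≤
      Filter.limsup (fun n => X n ω) Filter.atTop := by
  have hXfin : ∀ n, ∫⁻ ω, X n ω ∂ρ ≠ ⊤ := fun n =>
    ne_top_of_le_ne_top hfin (lintegral_mono fun ω => le_iSup (fun n => X n ω) n)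
  have hg0 : ∀ n, Measurable (g n) := fun n => (hg n).mono (ℱ.le n) le_rfl
  have hgfin : ∀ n, ∫⁻ ω, g n ω ∂ρ ≠ ⊤ := fun n => by
    have := hgX n Set.univ MeasurableSet.univ
    rw [Measure.restrict_univ] at this
    rw [this]; exact hXfin n
  set Z : ℕ → Ω → ℝ≥0∞ := fun m ω => ⨆ n, X (n + m) ω with hZ
  have hZm : ∀ m, Measurable (Z m) := fun m => Measurable.iSup fun n => hX _
  have hZfin : ∀ m, ∫⁻ ω, Z m ω ∂ρ ≠ ⊤ := fun m =>
    ne_top_of_le_ne_top hfin (lintegral_mono fun ω => iSup_le fun n => le_iSup (fun n => X n ω) (n + m))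
  have hintX : ∀ n, Integrable (fun ω => (X n ω).toReal) ρ := fun n =>
    integrable_toReal_of_lintegral_ne_top (hX n).aemeasurable (hXfin n)
  have hintg : ∀ n, Integrable (fun ω => (g n ω).toReal) ρ := fun n =>
    integrable_toReal_of_lintegral_ne_top (hg0 n).aemeasurable (hgfin n)
  have hintZ : ∀ m, Integrable (fun ω => (Z m ω).toReal) ρ := fun m =>
    integrable_toReal_of_lintegral_ne_top (hZm m).aemeasurable (hZfin m)
  have aeX : ∀ n, ∀ᵐ ω ∂ρ, X n ω < ⊤ := fun n => ae_lt_top (hX n) (hXfin n)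
  have aeg : ∀ n, ∀ᵐ ω ∂ρ, g n ω < ⊤ := fun n => ae_lt_top (hg0 n) (hgfin n)
  have aeZ : ∀ n, ∀ᵐ ω ∂ρ, Z n ω < ⊤ := fun n => ae_lt_top (hZm n) (hZfin n)
  have hce : ∀ n, (fun ω => (g n ω).toReal) =ᵐ[ρ] ρ[fun ω => (X n ω).toReal | ℱ n] := by
    intro n
    refine ae_eq_condExp_of_forall_setIntegral_eq (ℱ.le n) (hintX n)
      (fun s _ _ => (hintg n).integrableOn) (fun s hs _ => ?_) ?_
    · rw [integral_toReal (hg0 n).aemeasurable (ae_restrict_of_ae (aeg n)),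
        integral_toReal (hX n).aemeasurable (ae_restrict_of_ae (aeX n)), hgX n s hs]
    · exact (hg n).ennreal_toReal.stronglyMeasurable.aestronglyMeasurable
  have hmono : ∀ m n, (fun ω => (g (n + m) ω).toReal) ≤ᵐ[ρ] ρ[fun ω => (Z m ω).toReal | ℱ (n + m)] := by
    intro m n
    refine (hce (n + m)).trans_le (condExp_mono (hintX _) (hintZ m) ?_)
    filter_upwards [aeZ m] with ω hω
    exact ENNReal.toReal_mono hω.ne (le_iSup (fun n => X (n + m) ω) n)
  have hlim : ∀ m, ∀ᵐ ω ∂ρ, Filter.Tendsto (fun n => (ρ[fun ω => (Z m ω).toReal | ℱ n]) ω)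
      Filter.atTop (nhds (Z m ω).toReal) := by
    intro m
    refine (hintZ m).tendsto_ae_condExp ?_
    rw [hsup]
    exact (hZm m).ennreal_toReal.stronglyMeasurable
  filter_upwards [ae_all_iff.2 aeg, ae_all_iff.2 aeZ, ae_all_iff.2 hlim,
    ae_all_iff.2 fun m => ae_all_iff.2 fun n => hmono m n] with ω w1 w2 w3 w4
  rw [Filter.limsup_eq_iInf_iSup_of_nat' (u := fun n => X n ω)]
  refine le_iInf fun m => ?_
  have t1 : Filter.Tendsto (fun n => ENNReal.ofReal ((ρ[fun ω => (Z m ω).toReal | ℱ (n + m)]) ω))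
      Filter.atTop (nhds (ENNReal.ofReal (Z m ω).toReal)) :=
    ENNReal.tendsto_ofReal ((Filter.tendsto_add_atTop_iff_nat m).2 (w3 m))
  rw [ENNReal.ofReal_toReal (w2 m).ne] at t1
  rw [← Filter.limsup_nat_add (fun n => g n ω) m]
  refine le_trans (Filter.limsup_le_limsup (Filter.Eventually.of_forall fun n => ?_)) t1.limsup_eq.le
  show g (n + m) ω ≤ _
  rw [← ENNReal.ofReal_toReal (w1 (n + m)).ne]
  exact ENNReal.ofReal_le_ofReal (w4 m n)

section Direct
variable {S : Type*} [MeasurableSpace S]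

lemma iid_measurable (iid : Measure S → Measure (ℕ → S))
    (hiid : ∀ 𝔭 : Measure S, IsProbabilityMeasure 𝔭 →
      IsProbabilityMeasure (iid 𝔭) ∧
        ∀ (n : ℕ) (A : Fin n → Set S), (∀ i, MeasurableSet (A i)) →
          iid 𝔭 {ω | ∀ i : Fin n, ω (i : ℕ) ∈ A i} = ∏ i, 𝔭 (A i))
    {X : Type*} [MeasurableSpace X] (f : X → Measure S) (hf : Measurable f)
    (hfp : ∀ x, IsProbabilityMeasure (f x)) : Measurable fun x => iid (f x) := by
  have : ∀ x, IsProbabilityMeasure (iid (f x)) := fun x => (hiid _ (hfp x)).1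
  refine Measurable.measure_of_isPiSystem_of_isProbabilityMeasure
    (S := squareCylinders fun _ : ℕ => {s : Set S | MeasurableSet s})
    generateFrom_squareCylinders.symm
    (isPiSystem_squareCylinders (fun _ => MeasurableSpace.isPiSystem_measurableSet) (by simp)) ?_
  rintro _ ⟨s, t, ht, rfl⟩
  classical
  have ht' : ∀ i, MeasurableSet (t i) := fun i => ht i (Set.mem_univ i)
  set n := s.sup id + 1 with hn
  let A : Fin n → Set S := fun i => if (i : ℕ) ∈ s then t i else Set.univ
  have hA : ∀ i, MeasurableSet (A i) := by
    intro i; simp only [A]; split_ifs; exacts [ht' _, MeasurableSet.univ]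
  have heq : (s : Set ℕ).pi t = {ω | ∀ i : Fin n, ω (i : ℕ) ∈ A i} := by
    ext ω
    simp only [Set.mem_pi, Finset.mem_coe, Set.mem_ofPred_eq, A]
    constructor
    · intro h i
      split_ifs with hi
      · exact h i hi
      · trivial
    · intro h i hi
      have hlt : i < n := Nat.lt_succ_of_le (Finset.le_sup (f := id) hi)
      have := h ⟨i, hlt⟩
      rwa [if_pos hi] at this
  rw [heq]
  simp_rw [fun x => (hiid (f x) (hfp x)).2 n A hA]
  exact Finset.measurable_prod _ fun i _ => (Measure.measurable_coe (hA i)).comp hf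

lemma exists_direct_kernel [Nonempty S] (iid : Measure S → Measure (ℕ → S))
    (hiid : ∀ 𝔭 : Measure S, IsProbabilityMeasure 𝔭 →
      IsProbabilityMeasure (iid 𝔭) ∧
        ∀ (n : ℕ) (A : Fin n → Set S), (∀ i, MeasurableSet (A i)) →
          iid 𝔭 {ω | ∀ i : Fin n, ω (i : ℕ) ∈ A i} = ∏ i, 𝔭 (A i))
    (ρ : Measure (ℕ → S)) [IsProbabilityMeasure ρ]
    (ptilde : (ℕ → S) → Measure S) (hptilde_meas : Measurable ptilde)
    (hptilde_prob : ∀ᵐ ω ∂ρ, IsProbabilityMeasure (ptilde ω))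
    (hdirect : ∀ C : Set (ℕ → S), MeasurableSet C → ∀ B : Set (Measure S), MeasurableSet B →
      ρ (C ∩ ptilde ⁻¹' B) = ∫⁻ ω in ptilde ⁻¹' B, iid (ptilde ω) C ∂ρ) :
    ∃ κ : Kernel (Measure S) (ℕ → S), IsMarkovKernel κ ∧ (∀ᵐ ω ∂ρ, κ (ptilde ω) = iid (ptilde ω)) ∧
      ρ.map (fun ω => (ptilde ω, ω)) = (ρ.map ptilde) ⊗ₘ κ := by
  classical
  obtain ⟨s₀⟩ := ‹Nonempty S›
  let f : Measure S → Measure S := fun μ => if μ Set.univ = 1 then μ else Measure.dirac s₀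
  have hf : Measurable f := by
    refine Measurable.ite ?_ measurable_id measurable_const
    exact (Measure.measurable_coe MeasurableSet.univ) (measurableSet_singleton 1)
  have hfp : ∀ μ, IsProbabilityMeasure (f μ) := by
    intro μ; simp only [f]; split_ifs with h
    · exact ⟨h⟩
    · infer_instance
  let κ : Kernel (Measure S) (ℕ → S) := ⟨fun μ => iid (f μ), iid_measurable iid hiid f hf hfp⟩
  have hκ : IsMarkovKernel κ := ⟨fun μ => (hiid _ (hfp μ)).1⟩
  have hae : ∀ᵐ ω ∂ρ, κ (ptilde ω) = iid (ptilde ω) := by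
    filter_upwards [hptilde_prob] with ω hω
    show iid (f (ptilde ω)) = _
    have : f (ptilde ω) = ptilde ω := if_pos hω.measure_univ
    rw [this]
  refine ⟨κ, hκ, hae, ?_⟩
  have hm : Measurable fun ω : ℕ → S => (ptilde ω, ω) := hptilde_meas.prodMk measurable_id
  have : IsProbabilityMeasure (ρ.map fun ω : ℕ → S => (ptilde ω, ω)) :=
    Measure.isProbabilityMeasure_map hm.aemeasurable
  have : IsProbabilityMeasure (ρ.map ptilde) :=
    Measure.isProbabilityMeasure_map hptilde_meas.aemeasurable
  refine Measure.ext_prod fun {B C} hB hC => ?_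
  rw [Measure.map_apply hm (hB.prod hC), Measure.compProd_apply_prod hB hC,
    setLIntegral_map hB (κ.measurable_coe hC) hptilde_meas]
  have : (fun ω : ℕ → S => (ptilde ω, ω)) ⁻¹' (B ×ˢ C) = C ∩ ptilde ⁻¹' B := by
    ext ω; simp [and_comm]
  rw [this, hdirect C hC B hB]
  refine lintegral_congr_ae (ae_restrict_of_ae ?_)
  filter_upwards [hae] with ω hω
  rw [hω]

lemma direct_ae (ρ : Measure (ℕ → S)) [IsProbabilityMeasure ρ]
    (ptilde : (ℕ → S) → Measure S) (hptilde_meas : Measurable ptilde)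
    (κ : Kernel (Measure S) (ℕ → S)) [IsMarkovKernel κ]
    (hκ : ρ.map (fun ω => (ptilde ω, ω)) = (ρ.map ptilde) ⊗ₘ κ)
    (l : Measure S × (ℕ → S) → ℝ≥0∞) (hl : Measurable l) (Y : (ℕ → S) → ℝ≥0∞)
    (h : ∀ᵐ ω ∂ρ, ∀ᵐ ω' ∂(κ (ptilde ω)), l (ptilde ω, ω') ≤ Y ω) :
    ∀ᵐ ω ∂ρ, l (ptilde ω, ω) ≤ Y ω := by
  have hm : Measurable fun ω : ℕ → S => (ptilde ω, ω) := hptilde_meas.prodMk measurable_id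
  have : IsProbabilityMeasure (ρ.map ptilde) :=
    Measure.isProbabilityMeasure_map hptilde_meas.aemeasurable
  have key : ∀ t : ℝ≥0∞, ∀ᵐ ω ∂ρ, κ (ptilde ω) {ω' | t < l (ptilde ω, ω')} = 0 →
      l (ptilde ω, ω) ≤ t := by
    intro t
    have hs : MeasurableSet {z : Measure S × (ℕ → S) | t < l z} := measurableSet_lt measurable_const hl
    have hM : Measurable fun μ => κ μ {ω' | t < l (μ, ω')} := Kernel.measurable_kernel_prodMk_left hs
    have hP : MeasurableSet {z : Measure S × (ℕ → S) | κ z.1 {ω' | t < l (z.1, ω')} = 0 → l z ≤ t} := by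
      have h1 : MeasurableSet {z : Measure S × (ℕ → S) | κ z.1 {ω' | t < l (z.1, ω')} = 0} :=
        (hM.comp measurable_fst) (measurableSet_singleton 0)
      exact h1.imp (measurableSet_le hl measurable_const)
    have : ∀ᵐ z ∂(ρ.map (fun ω => (ptilde ω, ω))), κ z.1 {ω' | t < l (z.1, ω')} = 0 → l z ≤ t := by
      rw [hκ, Measure.ae_compProd_iff hP]
      refine Filter.Eventually.of_forall fun μ => ?_
      by_cases h0 : κ μ {ω' | t < l (μ, ω')} = 0
      · have : ∀ᵐ ω' ∂(κ μ), ¬ t < l (μ, ω') := by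
          rw [ae_iff]; simpa using h0
        filter_upwards [this] with ω' hω' _
        exact not_lt.1 hω'
      · exact Filter.Eventually.of_forall fun ω' h => absurd h h0
    exact ae_of_ae_map hm.aemeasurable this
  have key' := ae_all_iff.2 fun q : ℚ => key (ENNReal.ofReal q)
  filter_upwards [key', h] with ω h1 h2
  refine le_of_forall_gt_imp_ge_of_dense fun y hy => ?_
  obtain ⟨q, -, hq1, hq2⟩ := ENNReal.lt_iff_exists_rat_btwn.1 hy
  refine (h1 q ?_).trans hq2.le
  have : ∀ᵐ ω' ∂(κ (ptilde ω)), ¬ ENNReal.ofReal q < l (ptilde ω, ω') := by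
    filter_upwards [h2] with ω' hω'
    exact not_lt.2 (hω'.trans hq1.le)
  rw [ae_iff] at this
  simpa using this

end Direct

lemma limsup_rpow_const (u : ℕ → ℝ≥0∞) {y : ℝ} (hy : 0 < y) :
    Filter.limsup (fun n => u n ^ y) Filter.atTop = (Filter.limsup u Filter.atTop) ^ y := by
  have := (ENNReal.orderIsoRpow y hy).limsup_apply (f := Filter.atTop) (u := u)
  simpa using this.symm

lemma post_direct {S : Type*} [MeasurableSpace S] (ρ : Measure (ℕ → S)) [IsProbabilityMeasure ρ]
    (ptilde : (ℕ → S) → Measure S) (hptilde_meas : Measurable ptilde) (n : ℕ)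
    (κ : Kernel (Fin n → S) (Measure S)) [IsMarkovKernel κ]
    (hpost : ∀ (A : Set (Fin n → S)), MeasurableSet A →
      ∀ B : Set (Measure S), MeasurableSet B →
        ρ {ω | (fun i : Fin n => ω (i : ℕ)) ∈ A ∧ ptilde ω ∈ B}
          = ∫⁻ ω in {ω | (fun i : Fin n => ω (i : ℕ)) ∈ A},
              κ (fun i : Fin n => ω (i : ℕ)) B ∂ρ) :
    ρ.map (fun ω => ((fun i : Fin n => ω (i : ℕ)), ptilde ω)) =
      (ρ.map (fun ω => (fun i : Fin n => ω (i : ℕ)))) ⊗ₘ κ := by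
  have hξ : Measurable fun ω : ℕ → S => (fun i : Fin n => ω (i : ℕ)) :=
    measurable_pi_lambda _ fun i => measurable_pi_apply _
  have hm : Measurable fun ω : ℕ → S => ((fun i : Fin n => ω (i : ℕ)), ptilde ω) :=
    hξ.prodMk hptilde_meas
  have : IsProbabilityMeasure (ρ.map fun ω : ℕ → S => ((fun i : Fin n => ω (i : ℕ)), ptilde ω)) :=
    Measure.isProbabilityMeasure_map hm.aemeasurable
  have : IsProbabilityMeasure (ρ.map fun ω : ℕ → S => (fun i : Fin n => ω (i : ℕ))) :=
    Measure.isProbabilityMeasure_map hξ.aemeasurable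
  refine Measure.ext_prod fun {A B} hA hB => ?_
  rw [Measure.map_apply hm (hA.prod hB), Measure.compProd_apply_prod hA hB,
    setLIntegral_map hA (κ.measurable_coe hB) hξ]
  exact hpost A hA B hB

/-- The filtration generated by the coordinates: at time `n` the first `n + 1` of them. -/
def coordFilt (S : Type*) [MeasurableSpace S] :
    Filtration ℕ (inferInstance : MeasurableSpace (ℕ → S)) where
  seq n := MeasurableSpace.comap (fun ω : ℕ → S => (fun i : Fin (n + 1) => ω (i : ℕ))) inferInstance
  mono' := by
    intro n m hnm
    have hr : Measurable fun (v : Fin (m + 1) → S) (i : Fin (n + 1)) =>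
        v ⟨i, lt_of_lt_of_le i.2 (by omega)⟩ :=
      measurable_pi_lambda _ fun i => measurable_pi_apply _
    exact measurable_iff_comap_le.1 (hr.comp
      (comap_measurable (fun ω : ℕ → S => (fun i : Fin (m + 1) => ω (i : ℕ)))))
  le' := by
    intro n
    rw [← measurable_iff_comap_le]
    exact measurable_pi_lambda _ fun i => measurable_pi_apply _

lemma coordFilt_iSup (S : Type*) [MeasurableSpace S] :
    ⨆ n, coordFilt S n = (inferInstance : MeasurableSpace (ℕ → S)) := by
  refine le_antisymm (iSup_le fun n => (coordFilt S).le n) ?_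
  refine iSup_le fun i => ?_
  refine le_trans ?_ (le_iSup _ i)
  rw [← measurable_iff_comap_le]
  have h1 : Measurable fun v : Fin (i + 1) → S => v ⟨i, by omega⟩ := measurable_pi_apply _
  exact h1.comp (comap_measurable (fun ω : ℕ → S => (fun j : Fin (i + 1) => ω (j : ℕ))))


/-- merging of the posterior distributions with the point masses at
the estimators `p̂_n`: under uniform (`hMain1`) and almost-sure (`hMain2`)
bounds for the i.i.d. approximation problem, holding with `ρ`-probability one
for the directing measure `p̃`, one has
`limsup_n b_n d^{(p)}_{[[S]_p]}( π(ξ^{(n)}), δ_{p̂_n} ) ≤ Y_p(p̃)` a.s.-`ρ`. -/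
theorem posterior_merging
    {S : Type*} [MetricSpace S] [TopologicalSpace.SeparableSpace S]
    [MeasurableSpace S] [BorelSpace S]
    (hRadon : ∀ μ : Measure S, IsProbabilityMeasure μ → μ.InnerRegular)
    -- the product-measure map `𝔭 ↦ 𝔭^∞`
    (iid : Measure S → Measure (ℕ → S))
    (hiid : ∀ 𝔭 : Measure S, IsProbabilityMeasure 𝔭 →
      IsProbabilityMeasure (iid 𝔭) ∧
        ∀ (n : ℕ) (A : Fin n → Set S), (∀ i, MeasurableSet (A i)) →
          iid 𝔭 {ω | ∀ i : Fin n, ω (i : ℕ) ∈ A i} = ∏ i, 𝔭 (A i))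
    -- an exchangeable law `ρ` on `S^∞`
    (ρ : Measure (ℕ → S)) [IsProbabilityMeasure ρ]
    (hexch : ∀ σ : Equiv.Perm ℕ, ρ.map (fun ω => ω ∘ σ) = ρ)
    -- the directing (de Finetti) random measure `p̃`
    (ptilde : (ℕ → S) → Measure S) (hptilde_meas : Measurable ptilde)
    (hptilde_prob : ∀ᵐ ω ∂ρ, IsProbabilityMeasure (ptilde ω))
    (hdirect : ∀ C : Set (ℕ → S), MeasurableSet C → ∀ B : Set (Measure S), MeasurableSet B →
      ρ (C ∩ ptilde ⁻¹' B) = ∫⁻ ω in ptilde ⁻¹' B, iid (ptilde ω) C ∂ρ)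
    (p : ℝ) (hp : 1 ≤ p)
    -- the estimators `p̂_n`, measurable functions of the first `n` coordinates
    (phat : (n : ℕ) → (Fin n → S) → Measure S)
    (hphat_meas : ∀ n, Measurable (phat n))
    (hphatWp : ∀ n v, MemWp p (phat n v))
    (hptildeWp : ∀ᵐ ω ∂ρ, MemWp p (ptilde ω))
    -- the posterior distributions `π(ξ^{(n)})`
    (post : (n : ℕ) → (Fin n → S) → Measure (Measure S))
    (hpost_prob : ∀ n v, IsProbabilityMeasure (post n v))
    (hpost_meas : ∀ n, Measurable (post n))
    (hpost : ∀ (n : ℕ) (A : Set (Fin n → S)), MeasurableSet A →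
      ∀ B : Set (Measure S), MeasurableSet B →
        ρ {ω | (fun i : Fin n => ω (i : ℕ)) ∈ A ∧ ptilde ω ∈ B}
          = ∫⁻ ω in {ω | (fun i : Fin n => ω (i : ℕ)) ∈ A},
              post n (fun i : Fin n => ω (i : ℕ)) B ∂ρ)
    -- the sequence `b_n`
    (b : ℕ → ℝ) (hbpos : ∀ n, 0 < b n) (hbmono : Monotone b)
    (hbdiv : Filter.Tendsto b Filter.atTop Filter.atTop)
    -- the random constants `C_p(p̃)` and `Y_p(p̃)`
    (Cp Yp : Measure S → ℝ)
    (hCp_meas : Measurable fun ω => Cp (ptilde ω))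
    (hYp_meas : Measurable fun ω => Yp (ptilde ω))
    (hCp_int : Integrable (fun ω => Cp (ptilde ω)) ρ)
    -- (eq:Main1) holds with `ρ`-probability one for `p̃`
    (hMain1 : ∀ᵐ ω ∂ρ, ∫⁻ ω', ⨆ n : ℕ, ENNReal.ofReal
        ((b (n + 1) * wassW (fun u v => dist u v) p (ptilde ω)
          (phat (n + 1) (fun i : Fin (n + 1) => ω' (i : ℕ)))) ^ p) ∂(iid (ptilde ω))
        ≤ ENNReal.ofReal (Cp (ptilde ω)))
    -- (eq:Main2) holds with `ρ`-probability one for `p̃`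
    (hMain2 : ∀ᵐ ω ∂ρ, ∀ᵐ ω' ∂(iid (ptilde ω)),
      Filter.limsup (fun n : ℕ => ENNReal.ofReal
          (b (n + 1) * wassW (fun u v => dist u v) p (ptilde ω)
            (phat (n + 1) (fun i : Fin (n + 1) => ω' (i : ℕ))))) Filter.atTop
        ≤ ENNReal.ofReal (Yp (ptilde ω))) :
    ∀ᵐ ω ∂ρ, Filter.limsup (fun n : ℕ => ENNReal.ofReal
        (b n * wassW (fun μ ν => wassW (fun u v => dist u v) p μ ν) p
          (post n (fun i : Fin n => ω (i : ℕ)))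
          (Measure.dirac (phat n (fun i : Fin n => ω (i : ℕ)))))) Filter.atTop
      ≤ ENNReal.ofReal (Yp (ptilde ω)) := by
  have : SecondCountableTopology S := UniformSpace.secondCountable_of_separable S
  have hne : Nonempty S := by
    have : Nonempty (ℕ → S) := nonempty_of_isProbabilityMeasure ρ
    exact this.map fun ω => ω 0
  have hp0 : 0 < p := by linarith
  let x₀ : S := Classical.arbitrary S
  have hξ : ∀ n, Measurable fun ω : ℕ → S => (fun i : Fin n => ω (i : ℕ)) := fun n =>
    measurable_pi_lambda _ fun i => measurable_pi_apply _
  have hphatG : ∀ n v, phat n v ∈ GG p x₀ := fun n v => (hphatWp n v).mem_GG hp x₀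
  have hptG : ∀ᵐ ω ∂ρ, ptilde ω ∈ GG p x₀ := by
    filter_upwards [hptildeWp] with ω hω using hω.mem_GG hp x₀
  have hW : ∀ μ ν : Measure S, 0 ≤ wassW (fun u v => dist u v) p μ ν :=
    wassW_nonneg (fun u v : S => dist u v) (fun _ _ => dist_nonneg) p
  obtain ⟨κ, hκM, hκae, hκ⟩ := exists_direct_kernel iid hiid ρ ptilde hptilde_meas hptilde_prob hdirect
  let l : ℕ → Measure S × (ℕ → S) → ℝ≥0∞ := fun n z =>
    ENNReal.ofReal (b (n + 1)) ^ p * VV p x₀ (z.1, phat (n + 1) (fun i : Fin (n + 1) => z.2 (i : ℕ)))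
  have hl : ∀ n, Measurable (l n) := by
    intro n
    refine Measurable.const_mul ((measurable_VV p x₀).comp ?_) _
    exact measurable_fst.prodMk ((hphat_meas _).comp ((hξ _).comp measurable_snd))
  have hlW : ∀ n μ ω, μ ∈ GG p x₀ → l n (μ, ω) = ENNReal.ofReal (b (n + 1) *
      wassW (fun u v => dist u v) p μ (phat (n + 1) (fun i : Fin (n + 1) => ω (i : ℕ)))) ^ p := by
    intro n μ ω hμ
    rw [ENNReal.ofReal_mul (hbpos _).le, ENNReal.mul_rpow_of_nonneg _ _ hp0.le,
      wassW_eq_VV hp x₀ hμ (hphatG _ _)]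
  have hm : Measurable fun ω : ℕ → S => (ptilde ω, ω) := hptilde_meas.prodMk measurable_id
  have hρp : IsProbabilityMeasure (ρ.map ptilde) :=
    Measure.isProbabilityMeasure_map hptilde_meas.aemeasurable
  -- integrability of the supremum
  have hfin : ∫⁻ ω, ⨆ n, l n (ptilde ω, ω) ∂ρ ≠ ⊤ := by
    have hls : Measurable fun z => ⨆ n, l n z := Measurable.iSup hl
    rw [← lintegral_map (f := fun z => ⨆ n, l n z) hls hm, hκ, Measure.lintegral_compProd hls,
      lintegral_map (Measurable.lintegral_kernel_prod_right' hls) hptilde_meas]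
    refine ne_top_of_le_ne_top (Integrable.lintegral_lt_top hCp_int).ne (lintegral_mono_ae ?_)
    filter_upwards [hMain1, hκae, hptG] with ω h1 h2 h3
    rw [h2]
    refine le_trans (lintegral_mono fun ω' => iSup_mono fun n => ?_) h1
    rw [hlW n _ _ h3, ENNReal.ofReal_rpow_of_nonneg (mul_nonneg (hbpos _).le (hW _ _)) hp0.le]
  -- the almost sure bound
  have hlim : ∀ᵐ ω ∂ρ, Filter.limsup (fun n => l n (ptilde ω, ω)) Filter.atTop
      ≤ ENNReal.ofReal (Yp (ptilde ω)) ^ p := by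
    refine direct_ae ρ ptilde hptilde_meas κ hκ (fun z => Filter.limsup (fun n => l n z) Filter.atTop)
      (Measurable.limsup hl) (fun ω => ENNReal.ofReal (Yp (ptilde ω)) ^ p) ?_
    filter_upwards [hMain2, hκae, hptG] with ω h1 h2 h3
    rw [h2]
    filter_upwards [h1] with ω' h4
    simp_rw [fun n => hlW n (ptilde ω) ω' h3]
    rw [limsup_rpow_const _ hp0]
    gcongr
  -- the posterior
  let κp : (n : ℕ) → Kernel (Fin n → S) (Measure S) := fun n => ⟨post n, hpost_meas n⟩
  have hκpM : ∀ n, IsMarkovKernel (κp n) := fun n => ⟨fun v => hpost_prob n v⟩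
  have hκp : ∀ n, ρ.map (fun ω => ((fun i : Fin n => ω (i : ℕ)), ptilde ω)) =
      (ρ.map (fun ω => (fun i : Fin n => ω (i : ℕ)))) ⊗ₘ (κp n) := fun n =>
    post_direct ρ ptilde hptilde_meas n (κp n) (hpost n)
  have hρξ : ∀ n, IsProbabilityMeasure (ρ.map fun ω : ℕ → S => (fun i : Fin n => ω (i : ℕ))) :=
    fun n => Measure.isProbabilityMeasure_map (hξ n).aemeasurable
  have hpostG : ∀ n, ∀ᵐ ω ∂ρ, ∀ᵐ μ ∂(post n (fun i : Fin n => ω (i : ℕ))), μ ∈ GG p x₀ := by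
    intro n
    have h1 : ∀ᵐ z ∂(ρ.map (fun ω => ((fun i : Fin n => ω (i : ℕ)), ptilde ω))), z.2 ∈ GG p x₀ := by
      rw [ae_map_iff ((hξ n).prodMk hptilde_meas).aemeasurable
        (measurable_snd (measurableSet_GG p x₀))]
      exact hptG
    rw [hκp n] at h1
    exact ae_of_ae_map (hξ n).aemeasurable (Measure.ae_ae_of_ae_compProd h1)
  let h : (n : ℕ) → (Fin (n + 1) → S) × Measure S → ℝ≥0∞ := fun n z =>
    ENNReal.ofReal (b (n + 1)) ^ p * VV p x₀ (z.2, phat (n + 1) z.1)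
  have hh : ∀ n, Measurable (h n) := fun n =>
    Measurable.const_mul ((measurable_VV p x₀).comp
      (measurable_snd.prodMk ((hphat_meas _).comp measurable_fst))) _
  let gv : (n : ℕ) → (Fin (n + 1) → S) → ℝ≥0∞ := fun n v => ∫⁻ μ, h n (v, μ) ∂(κp (n + 1) v)
  have hgv : ∀ n, Measurable (gv n) := fun n => Measurable.lintegral_kernel_prod_right' (hh n)
  have hBD := limsup_le_of_cond ρ (coordFilt S) (coordFilt_iSup S)
    (fun n ω => l n (ptilde ω, ω)) (fun n ω => gv n (fun i : Fin (n + 1) => ω (i : ℕ)))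
    (fun n => (hl n).comp hm) (fun n => (hgv n).comp (comap_measurable _)) (by
      rintro n _ ⟨A, hA, rfl⟩
      have e1 := setLIntegral_map (μ := ρ) hA (hgv n) (hξ (n + 1))
      have e2 := setLIntegral_map (μ := ρ) (hA.prod (MeasurableSet.univ (α := Measure S))) (hh n)
        ((hξ (n + 1)).prodMk hptilde_meas)
      have e3 := Measure.setLIntegral_compProd (μ := ρ.map fun ω : ℕ → S => (fun i : Fin (n + 1) => ω (i : ℕ)))
        (κ := κp (n + 1)) (hh n) hA (MeasurableSet.univ (α := Measure S))
      rw [hκp (n + 1), e3] at e2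
      simp only [Measure.restrict_univ] at e2
      rw [← e1]
      refine e2.trans ?_
      have : (fun ω : ℕ → S => ((fun i : Fin (n + 1) => ω (i : ℕ)), ptilde ω)) ⁻¹' (A ×ˢ Set.univ)
        = (fun ω : ℕ → S => (fun i : Fin (n + 1) => ω (i : ℕ))) ⁻¹' A := by ext ω; simp
      rw [this]) hfin
  filter_upwards [hBD, hlim, ae_all_iff.2 hpostG] with ω h1 h2 h3
  rw [← Filter.limsup_nat_add _ 1]
  have h4 : ∀ n, ENNReal.ofReal
        (b (n + 1) * wassW (fun μ ν => wassW (fun u v => dist u v) p μ ν) p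
          (post (n + 1) (fun i : Fin (n + 1) => ω (i : ℕ)))
          (Measure.dirac (phat (n + 1) (fun i : Fin (n + 1) => ω (i : ℕ)))))
      ≤ (gv n (fun i : Fin (n + 1) => ω (i : ℕ))) ^ (1 / p) := by
    intro n
    have := hpost_prob (n + 1) (fun i : Fin (n + 1) => ω (i : ℕ))
    have h5 := wassW_outer_le hp x₀ _ (h3 (n + 1)) _ (hphatG (n + 1) (fun i : Fin (n + 1) => ω (i : ℕ)))
    have h6 : gv n (fun i : Fin (n + 1) => ω (i : ℕ)) = ENNReal.ofReal (b (n + 1)) ^ p *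
        ∫⁻ μ, VV p x₀ (μ, phat (n + 1) (fun i : Fin (n + 1) => ω (i : ℕ)))
          ∂(post (n + 1) (fun i : Fin (n + 1) => ω (i : ℕ))) :=
      lintegral_const_mul' _ _ (ENNReal.rpow_ne_top_of_nonneg hp0.le ENNReal.ofReal_ne_top)
    rw [h6, ENNReal.mul_rpow_of_nonneg _ _ (by positivity), ← ENNReal.rpow_mul,
      mul_one_div_cancel hp0.ne', ENNReal.rpow_one, ENNReal.ofReal_mul (hbpos _).le]
    gcongr
  refine (Filter.limsup_le_limsup (Filter.Eventually.of_forall h4)).trans ?_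
  rw [limsup_rpow_const _ (by positivity)]
  calc _ ≤ (ENNReal.ofReal (Yp (ptilde ω)) ^ p) ^ (1 / p) :=
        ENNReal.rpow_le_rpow (h1.trans h2) (by positivity)
    _ = _ := by rw [← ENNReal.rpow_mul, mul_one_div_cancel hp0.ne', ENNReal.rpow_one]

end
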